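/- arXiv:1903.03331 — 5 statements merged into one kernel-verified Lean document; each statement's English description precedes it below -/
import Mathlib

section
/- For all natural numbers j ≤ n, all i, k < ω, and every GLP_ω formula φ, the implication ⟨j⟩(φ ∧ Q_n^{i+k}(φ)) → Q_j^i(φ ∧ Q_n^k(φ)) is derivable in GLP_ω. -/
/-- Formulas of polymodal provability logic GLP: propositional variables, ⊤,
Boolean connectives, and a modality `[ξ]` for each ordinal `ξ`. -/
inductive GLPFormula : Type 1 where
  | var : ℕ → GLPFormula
  | top : GLPFormula
  | neg : GLPFormula → GLPFormula
  | and : GLPFormula → GLPFormula → GLPFormula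
  | imp : GLPFormula → GLPFormula → GLPFormula
  | box : Ordinal → GLPFormula → GLPFormula

namespace GLPFormula

/-- `⟨ξ⟩φ` abbreviates `¬[ξ]¬φ`. -/
def dia (ξ : Ordinal) (φ : GLPFormula) : GLPFormula := neg (box ξ (neg φ))

/-- Biconditional, defined from the other connectives. -/
def biimp (φ ψ : GLPFormula) : GLPFormula := and (imp φ ψ) (imp ψ φ)

/-- The set of ordinals occurring as modality indices in a formula. -/
def mods : GLPFormula → Set Ordinal
  | var _ => ∅
  | top => ∅
  | neg φ => mods φ
  | and φ ψ => mods φ ∪ mods ψ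
  | imp φ ψ => mods φ ∪ mods ψ
  | box ξ φ => insert ξ (mods φ)

end GLPFormula

/-- A propositional tautology: true under every Boolean valuation that respects
the Boolean connectives (variables and boxed formulas are treated as atoms). -/
def IsTautology (φ : GLPFormula) : Prop :=
  ∀ v : GLPFormula → Bool,
    v GLPFormula.top = true →
    (∀ ψ, v ψ.neg = !v ψ) →
    (∀ ψ χ, v (ψ.and χ) = (v ψ && v χ)) →
    (∀ ψ χ, v (ψ.imp χ) = (!v ψ || v χ)) →
    v φ = true

/-- Derivability in GLP, with modality indices restricted to the set `S`
(`S = Set.univ` gives full GLP; `S = Set.Iio ω` gives GLP_ω). -/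
inductive GLPProof (S : Set Ordinal) : GLPFormula → Prop where
  | taut {φ} : φ.mods ⊆ S → IsTautology φ → GLPProof S φ
  | distr {ξ φ ψ} : ξ ∈ S → φ.mods ⊆ S → ψ.mods ⊆ S →
      GLPProof S ((GLPFormula.box ξ (φ.imp ψ)).imp
        ((GLPFormula.box ξ φ).imp (GLPFormula.box ξ ψ)))
  | trans {ξ φ} : ξ ∈ S → φ.mods ⊆ S →
      GLPProof S ((GLPFormula.box ξ φ).imp (GLPFormula.box ξ (GLPFormula.box ξ φ)))
  | lob {ξ φ} : ξ ∈ S → φ.mods ⊆ S →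
      GLPProof S ((GLPFormula.box ξ ((GLPFormula.box ξ φ).imp φ)).imp (GLPFormula.box ξ φ))
  | negIntro {ξ ζ φ} : ξ < ζ → ξ ∈ S → ζ ∈ S → φ.mods ⊆ S →
      GLPProof S ((GLPFormula.dia ζ φ).imp (GLPFormula.dia ξ φ))
  | mono {ξ ζ φ} : ξ < ζ → ξ ∈ S → ζ ∈ S → φ.mods ⊆ S →
      GLPProof S ((GLPFormula.dia ξ φ).imp (GLPFormula.box ζ (GLPFormula.dia ξ φ)))
  | mp {φ ψ} : GLPProof S (φ.imp ψ) → GLPProof S φ → GLPProof S ψ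
  | nec {ξ φ} : ξ ∈ S → GLPProof S φ → GLPProof S (GLPFormula.box ξ φ)

/-- Derivability in full GLP (modalities indexed by all ordinals). -/
def GLPProves (φ : GLPFormula) : Prop := GLPProof Set.univ φ

/-- Derivability in GLP_ω (modalities indexed by natural numbers). -/
def GLPomegaProves (φ : GLPFormula) : Prop := GLPProof (Set.Iio Ordinal.omega0) φ

/-- A GLP_ω formula: all modality indices are below ω. -/
def IsOmegaFormula (φ : GLPFormula) : Prop := φ.mods ⊆ Set.Iio Ordinal.omega0

/-- Conjunction of a finite list of formulas. -/
def listConj : List GLPFormula → GLPFormula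
  | [] => GLPFormula.top
  | φ :: l => φ.and (listConj l)

/-- `SetProves S τ χ`: the set `τ` proves `χ`, i.e. `ψ₁ ∧ … ∧ ψₘ → χ` is
derivable for some finite list of members of `τ`. -/
def SetProves (S : Set Ordinal) (τ : Set GLPFormula) (χ : GLPFormula) : Prop :=
  ∃ l : List GLPFormula, (∀ ψ ∈ l, ψ ∈ τ) ∧ GLPProof S ((listConj l).imp χ)

/-- The iterated consistency formulas: `Q n 0 φ = ⊤`, `Q n (k+1) φ = ⟨n⟩(φ ∧ Q n k φ)`. -/
def Q (n : Ordinal) : ℕ → GLPFormula → GLPFormula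
  | 0, _ => GLPFormula.top
  | k + 1, φ => GLPFormula.dia n ((GLPFormula.and φ (Q n k φ)))

/-- `diaPow n k φ` is `⟨n⟩^k φ`, `k` iterated applications of `⟨n⟩`. -/
def diaPow (n : Ordinal) : ℕ → GLPFormula → GLPFormula
  | 0, φ => φ
  | k + 1, φ => GLPFormula.dia n (diaPow n k φ)

/-- The formula corresponding to a worm, given as its list of modality indices:
`[] ↦ ⊤` and `γ :: A ↦ ⟨γ⟩A`. -/
def wormFormula : List Ordinal → GLPFormula
  | [] => GLPFormula.top
  | γ :: A => GLPFormula.dia γ (wormFormula A)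

/-- The generalized `Q`-formula: `Q(⊤,φ) = ⊤`, `Q(⟨γ⟩A, φ) = ⟨γ⟩(φ ∧ Q(A,φ))`. -/
def QWorm : List Ordinal → GLPFormula → GLPFormula
  | [], _ => GLPFormula.top
  | γ :: A, φ => GLPFormula.dia γ (GLPFormula.and φ (QWorm A φ))

namespace GLPAux
open GLPFormula

/-- Modalities of `Q`. -/
theorem mods_Q {S : Set Ordinal} {n : Ordinal} {φ : GLPFormula} (hn : n ∈ S) (h : φ.mods ⊆ S)
    (k : ℕ) : (Q n k φ).mods ⊆ S := by
  induction k with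
  | zero => simp [Q, mods]
  | succ k ih => simp [Q, mods, dia, Set.insert_subset_iff, hn, h, ih]

theorem imp_trans {S : Set Ordinal} {a b c : GLPFormula} (ha : a.mods ⊆ S) (hb : b.mods ⊆ S)
    (hc : c.mods ⊆ S) (h1 : GLPProof S (a.imp b)) (h2 : GLPProof S (b.imp c)) :
    GLPProof S (a.imp c) := by
  have t : GLPProof S ((a.imp b).imp ((b.imp c).imp (a.imp c))) := by
    refine GLPProof.taut (by simp [mods, ha, hb, hc]) ?_
    intro v _ _ _ hi
    simp only [hi]
    cases v a <;> cases v b <;> cases v c <;> rfl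
  exact (t.mp h1).mp h2

theorem and_intro {S : Set Ordinal} {a b c : GLPFormula} (ha : a.mods ⊆ S) (hb : b.mods ⊆ S)
    (hc : c.mods ⊆ S) (h1 : GLPProof S (a.imp b)) (h2 : GLPProof S (a.imp c)) :
    GLPProof S (a.imp (b.and c)) := by
  have t : GLPProof S ((a.imp b).imp ((a.imp c).imp (a.imp (b.and c)))) := by
    refine GLPProof.taut (by simp [mods, ha, hb, hc]) ?_
    intro v _ _ hand hi
    simp only [hi, hand]
    cases v a <;> cases v b <;> cases v c <;> rfl
  exact (t.mp h1).mp h2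

theorem and_left {S : Set Ordinal} {a b : GLPFormula} (ha : a.mods ⊆ S) (hb : b.mods ⊆ S) :
    GLPProof S ((a.and b).imp a) := by
  refine GLPProof.taut (by simp [mods, ha, hb]) ?_
  intro v _ _ hand hi
  simp only [hi, hand]
  cases v a <;> cases v b <;> rfl

theorem and_right {S : Set Ordinal} {a b : GLPFormula} (ha : a.mods ⊆ S) (hb : b.mods ⊆ S) :
    GLPProof S ((a.and b).imp b) := by
  refine GLPProof.taut (by simp [mods, ha, hb]) ?_
  intro v _ _ hand hi
  simp only [hi, hand]
  cases v a <;> cases v b <;> rfl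

theorem imp_top {S : Set Ordinal} {a : GLPFormula} (ha : a.mods ⊆ S) :
    GLPProof S (a.imp top) := by
  refine GLPProof.taut (by simp [mods, ha]) ?_
  intro v ht _ _ hi
  simp [hi, ht]

theorem imp_self {S : Set Ordinal} {a : GLPFormula} (ha : a.mods ⊆ S) :
    GLPProof S (a.imp a) := by
  refine GLPProof.taut (by simp [mods, ha]) ?_
  intro v ht _ _ hi
  simp [hi]

theorem contra {S : Set Ordinal} {a b : GLPFormula} (ha : a.mods ⊆ S) (hb : b.mods ⊆ S)
    (h : GLPProof S (a.imp b)) : GLPProof S (b.neg.imp a.neg) := by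
  have t : GLPProof S ((a.imp b).imp (b.neg.imp a.neg)) := by
    refine GLPProof.taut (by simp [mods, ha, hb]) ?_
    intro v _ hn _ hi
    simp only [hi, hn]
    cases v a <;> cases v b <;> rfl
  exact t.mp h

theorem dia_mono {S : Set Ordinal} {ξ : Ordinal} {a b : GLPFormula} (hξ : ξ ∈ S)
    (ha : a.mods ⊆ S) (hb : b.mods ⊆ S)
    (h : GLPProof S (a.imp b)) : GLPProof S ((dia ξ a).imp (dia ξ b)) := by
  refine contra ?_ ?_ ((GLPProof.distr hξ ?_ ?_).mp (GLPProof.nec hξ (contra ha hb h))) <;>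
    simp [mods, Set.insert_subset_iff, ha, hb, hξ]

theorem Q_succ {S : Set Ordinal} {n : Ordinal} {φ : GLPFormula} (hn : n ∈ S) (h : φ.mods ⊆ S)
    (k : ℕ) : GLPProof S ((Q n (k + 1) φ).imp (Q n k φ)) := by
  induction k with
  | zero => exact imp_top (mods_Q hn h 1)
  | succ k ih =>
    have h1 := mods_Q hn h (k + 1)
    have h0 := mods_Q hn h k
    have m1 : (φ.and (Q n (k + 1) φ)).mods ⊆ S := Set.union_subset h h1
    have m0 : (φ.and (Q n k φ)).mods ⊆ S := Set.union_subset h h0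
    exact dia_mono hn m1 m0 (and_intro m1 h h0 (and_left h h1)
      (imp_trans m1 h1 h0 (and_right h h1) ih))

theorem Q_add {S : Set Ordinal} {n : Ordinal} {φ : GLPFormula} (hn : n ∈ S) (h : φ.mods ⊆ S)
    (i k : ℕ) : GLPProof S ((Q n (i + k) φ).imp (Q n k φ)) := by
  induction i with
  | zero => rw [Nat.zero_add]; exact imp_self (mods_Q hn h k)
  | succ i ih =>
    rw [Nat.add_right_comm]
    exact imp_trans (mods_Q hn h _) (mods_Q hn h _) (mods_Q hn h _) (Q_succ hn h _) ih

theorem dia_mods {S : Set Ordinal} {ξ : Ordinal} {a : GLPFormula} (hξ : ξ ∈ S)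
    (ha : a.mods ⊆ S) : (dia ξ a).mods ⊆ S := Set.insert_subset hξ ha

theorem main {S : Set Ordinal} {j n : Ordinal} {φ : GLPFormula} (hjn : j ≤ n) (hj : j ∈ S)
    (hn : n ∈ S) (h : φ.mods ⊆ S) (i k : ℕ) :
    GLPProof S ((dia j (φ.and (Q n (i + k) φ))).imp (Q j i (φ.and (Q n k φ)))) := by
  have hq := fun m => mods_Q hn h m
  have ha : ∀ m, (φ.and (Q n m φ)).mods ⊆ S := fun m => Set.union_subset h (hq m)
  have hQ := fun m => mods_Q hj (ha k) m
  induction i with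
  | zero => exact imp_top (dia_mods hj (ha _))
  | succ i ih =>
    have step : GLPProof S ((Q n (i + 1 + k) φ).imp (dia j (φ.and (Q n (i + k) φ)))) := by
      rw [Nat.add_right_comm]
      rcases hjn.eq_or_lt with e | l
      · rw [e]; exact imp_self (hq (i + k + 1))
      · exact GLPProof.negIntro l hj hn (ha _)
    have r := and_right h (hq (i + 1 + k))
    refine dia_mono hj (ha _) (Set.union_subset (ha k) (hQ i)) ?_
    refine and_intro (ha _) (ha k) (hQ i) ?_ ?_
    · exact and_intro (ha _) h (hq k) (and_left h (hq _))
        (imp_trans (ha _) (hq _) (hq _) r (Q_add hn h _ _))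
    · exact imp_trans (ha _) (hq _) (hQ i) r
        (imp_trans (hq _) (dia_mods hj (ha _)) (hQ i) step ih)

end GLPAux

/-- For `j ≤ n`, `⟨j⟩(φ ∧ Q_n^{i+k}(φ)) → Q_j^i(φ ∧ Q_n^k(φ))` is derivable in GLP_ω. -/
theorem dia_Q_to_iterated_Q (j n : ℕ) (hjn : j ≤ n) (i k : ℕ)
    (φ : GLPFormula) (hφ : IsOmegaFormula φ) :
    GLPomegaProves ((GLPFormula.dia (j : Ordinal)
        (GLPFormula.and φ (Q (n : Ordinal) (i + k) φ))).imp
      (Q (j : Ordinal) i (GLPFormula.and φ (Q (n : Ordinal) k φ)))) := by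
  exact GLPAux.main (by exact_mod_cast hjn) (Ordinal.natCast_lt_omega0 j)
    (Ordinal.natCast_lt_omega0 n) hφ i k
end

section
/- For all natural numbers j < n and all k, l < ω, the equivalence Q_j^l(⟨n⟩^k⊤) ↔ (⟨j⟩⟨n⟩^k)^l⊤ is derivable in GLP_ω, where ⟨n⟩^k⊤ denotes k iterated applications of ⟨n⟩ to ⊤ and (⟨j⟩⟨n⟩^k)^l⊤ denotes l iterated applications of the block ⟨j⟩⟨n⟩^k to ⊤. -/
/-- `blockIter j n k l` is `(⟨j⟩⟨n⟩^k)^l⊤`: `l` iterated applications of the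
block `⟨j⟩⟨n⟩^k` to `⊤`. -/
def blockIter (j n : Ordinal) (k : ℕ) : ℕ → GLPFormula
  | 0 => GLPFormula.top
  | l + 1 => GLPFormula.dia j (diaPow n k (blockIter j n k l))

theorem GLPAux.tc {S : Set Ordinal} {a b c : GLPFormula} (ha : GLPProof S a) (hb : GLPProof S b)
    (hm : ((a.imp (b.imp c)).mods ⊆ S)) (h : IsTautology (a.imp (b.imp c))) : GLPProof S c :=
  GLPProof.mp (GLPProof.mp (GLPProof.taut hm h) ha) hb

theorem GLPAux.boxMono {S : Set Ordinal} {ξ : Ordinal} {a b : GLPFormula} (hξ : ξ ∈ S)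
    (ha : a.mods ⊆ S) (hb : b.mods ⊆ S) (h : GLPProof S (a.imp b)) :
    GLPProof S ((a.box ξ).imp (b.box ξ)) :=
  GLPProof.mp (GLPProof.distr hξ ha hb) (GLPProof.nec hξ h)

theorem GLPAux.diaMono {S : Set Ordinal} {ξ : Ordinal} {a b : GLPFormula} (hξ : ξ ∈ S)
    (ha : a.mods ⊆ S) (hb : b.mods ⊆ S) (h : GLPProof S (a.imp b)) :
    GLPProof S ((GLPFormula.dia ξ a).imp (GLPFormula.dia ξ b)) := by
  have h1 : GLPProof S (b.neg.imp a.neg) := by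
    refine GLPAux.tc h h ?_ ?_
    · simp [GLPFormula.mods, *]
    · intro v h1 h2 h3 h4
      simp only [h1, h2, h3, h4]
      cases v a <;> cases v b <;> rfl
  have h2 := GLPAux.boxMono (a := b.neg) (b := a.neg) hξ hb ha h1
  refine GLPAux.tc h2 h2 ?_ ?_
  · simp [GLPFormula.mods, GLPFormula.dia, Set.insert_subset_iff, *]
  · intro v h1 h2 h3 h4
    simp only [h1, h2, h3, h4, GLPFormula.dia]
    cases v (GLPFormula.box ξ a.neg) <;> cases v (GLPFormula.box ξ b.neg) <;> rfl

theorem GLPAux.diaBox {S : Set Ordinal} {ξ : Ordinal} {a b : GLPFormula} (hξ : ξ ∈ S)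
    (ha : a.mods ⊆ S) (hb : b.mods ⊆ S) :
    GLPProof S (((GLPFormula.dia ξ a).and (b.box ξ)).imp (GLPFormula.dia ξ (a.and b))) := by
  have h1 : GLPProof S (b.imp ((a.and b).neg.imp a.neg)) := by
    refine GLPProof.taut ?_ ?_
    · simp [GLPFormula.mods, *]
    · intro v h1 h2 h3 h4
      simp only [h1, h2, h3, h4]
      cases v a <;> cases v b <;> rfl
  have h2 := GLPAux.boxMono hξ hb (by simp [GLPFormula.mods, *]) h1
  have h3 : GLPProof S _ := GLPProof.distr (φ := (a.and b).neg) (ψ := a.neg) hξ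
    (by simp [GLPFormula.mods, *]) (by simp [GLPFormula.mods, *])
  refine GLPAux.tc h2 h3 ?_ ?_
  · simp [GLPFormula.mods, GLPFormula.dia, Set.insert_subset_iff, *]
  · intro v h1 h2 h3 h4
    simp only [h1, h2, h3, h4, GLPFormula.dia]
    cases v (GLPFormula.box ξ a.neg) <;> cases v (GLPFormula.box ξ b) <;>
      cases v (GLPFormula.box ξ (a.and b).neg) <;>
      cases v (GLPFormula.box ξ ((a.and b).neg.imp a.neg)) <;> rfl

/-- transitivity for diamonds -/
theorem GLPAux.diaTrans {S : Set Ordinal} {ξ : Ordinal} {a : GLPFormula} (hξ : ξ ∈ S)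
    (ha : a.mods ⊆ S) :
    GLPProof S ((GLPFormula.dia ξ (GLPFormula.dia ξ a)).imp (GLPFormula.dia ξ a)) := by
  have h1 : GLPProof S ((a.neg.box ξ).imp (GLPFormula.dia ξ a).neg) := by
    refine GLPProof.taut ?_ ?_
    · simp [GLPFormula.mods, GLPFormula.dia, Set.insert_subset_iff, *]
    · intro v h1 h2 h3 h4
      simp only [h1, h2, h3, h4, GLPFormula.dia]
      cases v (GLPFormula.box ξ a.neg) <;> rfl
  have h2 := GLPAux.boxMono hξ (by simp [GLPFormula.mods, Set.insert_subset_iff, *])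
    (by simp [GLPFormula.mods, GLPFormula.dia, Set.insert_subset_iff, *]) h1
  have h3 : GLPProof S _ := GLPProof.trans (φ := a.neg) hξ (by simp [GLPFormula.mods, *])
  refine GLPAux.tc h2 h3 ?_ ?_
  · simp [GLPFormula.mods, GLPFormula.dia, Set.insert_subset_iff, *]
  · intro v h1 h2 h3 h4
    simp only [h1, h2, h3, h4, GLPFormula.dia]
    cases v (GLPFormula.box ξ a.neg) <;> cases v (GLPFormula.box ξ (GLPFormula.box ξ a.neg)) <;>
      cases v (GLPFormula.box ξ (GLPFormula.box ξ a.neg).neg.neg) <;> rfl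

theorem GLPAux.biI {S : Set Ordinal} {a b : GLPFormula} (ha : a.mods ⊆ S) (hb : b.mods ⊆ S)
    (h : GLPProof S (a.imp b)) (h' : GLPProof S (b.imp a)) : GLPProof S (a.biimp b) := by
  refine GLPAux.tc h h' ?_ ?_
  · simp [GLPFormula.mods, GLPFormula.biimp, *]
  · intro v h1 h2 h3 h4
    simp only [h1, h2, h3, h4, GLPFormula.biimp]
    cases v a <;> cases v b <;> rfl

theorem GLPAux.comp {S : Set Ordinal} {a b c : GLPFormula} (ha : a.mods ⊆ S) (hb : b.mods ⊆ S)
    (hc : c.mods ⊆ S)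
    (h : GLPProof S (a.imp b)) (h' : GLPProof S (b.imp c)) : GLPProof S (a.imp c) := by
  refine GLPAux.tc h h' ?_ ?_
  · simp [GLPFormula.mods, *]
  · intro v h1 h2 h3 h4
    simp only [h1, h2, h3, h4]
    cases v a <;> cases v b <;> cases v c <;> rfl

theorem GLPAux.andI {S : Set Ordinal} {a b c : GLPFormula} (ha : a.mods ⊆ S) (hb : b.mods ⊆ S)
    (hc : c.mods ⊆ S)
    (h : GLPProof S (a.imp b)) (h' : GLPProof S (a.imp c)) : GLPProof S (a.imp (b.and c)) := by
  refine GLPAux.tc h h' ?_ ?_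
  · simp [GLPFormula.mods, *]
  · intro v h1 h2 h3 h4
    simp only [h1, h2, h3, h4]
    cases v a <;> cases v b <;> cases v c <;> rfl

theorem GLPAux.andL {S : Set Ordinal} {a b : GLPFormula} (ha : a.mods ⊆ S) (hb : b.mods ⊆ S) :
    GLPProof S ((a.and b).imp a) := by
  refine GLPProof.taut ?_ ?_
  · simp [GLPFormula.mods, *]
  · intro v h1 h2 h3 h4
    simp only [h1, h2, h3, h4]
    cases v a <;> cases v b <;> rfl

theorem GLPAux.andR {S : Set Ordinal} {a b : GLPFormula} (ha : a.mods ⊆ S) (hb : b.mods ⊆ S) :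
    GLPProof S ((a.and b).imp b) := by
  refine GLPProof.taut ?_ ?_
  · simp [GLPFormula.mods, *]
  · intro v h1 h2 h3 h4
    simp only [h1, h2, h3, h4]
    cases v a <;> cases v b <;> rfl

theorem GLPAux.impTrue {S : Set Ordinal} {a b : GLPFormula} (ha : a.mods ⊆ S) (hb : b.mods ⊆ S)
    (h : GLPProof S b) : GLPProof S (a.imp b) := by
  refine GLPAux.tc h h ?_ ?_
  · simp [GLPFormula.mods, *]
  · intro v h1 h2 h3 h4
    simp only [h1, h2, h3, h4]
    cases v a <;> cases v b <;> rfl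

theorem GLPAux.topI {S : Set Ordinal} : GLPProof S GLPFormula.top :=
  GLPProof.taut (by simp [GLPFormula.mods]) (fun _ h _ _ _ => h)

theorem GLPAux.idI {S : Set Ordinal} {a : GLPFormula} (ha : a.mods ⊆ S) :
    GLPProof S (a.imp a) := by
  refine GLPProof.taut ?_ ?_
  · simp [GLPFormula.mods, *]
  · intro v h1 h2 h3 h4
    simp only [h4]
    cases v a <;> rfl

theorem GLPAux.modsDia {S : Set Ordinal} {ξ : Ordinal} {a : GLPFormula} (hξ : ξ ∈ S)
    (ha : a.mods ⊆ S) : (GLPFormula.dia ξ a).mods ⊆ S := by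
  simp [GLPFormula.mods, GLPFormula.dia, Set.insert_subset_iff, *]

theorem GLPAux.modsAnd {S : Set Ordinal} {a b : GLPFormula}
    (ha : a.mods ⊆ S) (hb : b.mods ⊆ S) : (a.and b).mods ⊆ S := by
  simp [GLPFormula.mods, *]

theorem GLPAux.modsPow {S : Set Ordinal} {ξ : Ordinal} {a : GLPFormula} (hξ : ξ ∈ S)
    (ha : a.mods ⊆ S) (k : ℕ) : (diaPow ξ k a).mods ⊆ S := by
  induction k with
  | zero => exact ha
  | succ k ih => exact GLPAux.modsDia hξ ih

/-- Pulling `B` out of an iterated diamond. -/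
theorem GLPAux.pull {S : Set Ordinal} {n : Ordinal} {B : GLPFormula} (hn : n ∈ S)
    (hB : B.mods ⊆ S) (h1 : GLPProof S (B.imp (B.box n)))
    (h2 : GLPProof S ((GLPFormula.dia n B).imp B)) (k : ℕ) :
    GLPProof S ((diaPow n k B).imp ((diaPow n k GLPFormula.top).and B)) ∧
    GLPProof S (((diaPow n k GLPFormula.top).and B).imp (diaPow n k B)) := by
  have hT : GLPFormula.top.mods ⊆ S := by simp [GLPFormula.mods]
  induction k with
  | zero =>
    exact ⟨GLPAux.andI hB hT hB (GLPAux.impTrue hB hT GLPAux.topI) (GLPAux.idI hB),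
      GLPAux.andR hT hB⟩
  | succ k ih =>
    obtain ⟨i1, i2⟩ := ih
    have hP := GLPAux.modsPow hn hT k
    have hPB := GLPAux.modsPow hn hB k
    have hA := GLPAux.modsAnd hP hB
    have hdP := GLPAux.modsDia hn hP
    have hdPB := GLPAux.modsDia hn hPB
    have hbB : (B.box n).mods ⊆ S := by simp [GLPFormula.mods, Set.insert_subset_iff, *]
    constructor
    · refine GLPAux.andI hdPB hdP hB ?_ ?_
      · exact GLPAux.diaMono hn hPB hP (GLPAux.comp hPB hA hP i1 (GLPAux.andL hP hB))
      · exact GLPAux.comp hdPB (GLPAux.modsDia hn hB) hB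
          (GLPAux.diaMono hn hPB hB (GLPAux.comp hPB hA hB i1 (GLPAux.andR hP hB))) h2
    · have hd := GLPAux.modsAnd hdP hB
      refine GLPAux.comp hd (GLPAux.modsDia hn hA) hdPB ?_ (GLPAux.diaMono hn hA hPB i2)
      refine GLPAux.comp hd (GLPAux.modsAnd hdP hbB) (GLPAux.modsDia hn hA) ?_
        (GLPAux.diaBox hn hP hB)
      exact GLPAux.andI hd hdP hbB (GLPAux.andL hdP hB)
        (GLPAux.comp hd hB hbB (GLPAux.andR hdP hB) h1)

theorem GLPAux.main_s11 {S : Set Ordinal} {j n : Ordinal} (hjn : j < n) (hj : j ∈ S) (hn : n ∈ S)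
    (k l : ℕ) :
    (Q j l (diaPow n k GLPFormula.top)).mods ⊆ S ∧ (blockIter j n k l).mods ⊆ S ∧
    GLPProof S ((Q j l (diaPow n k GLPFormula.top)).imp (blockIter j n k l)) ∧
    GLPProof S ((blockIter j n k l).imp (Q j l (diaPow n k GLPFormula.top))) ∧
    GLPProof S ((blockIter j n k l).imp ((blockIter j n k l).box n)) ∧
    GLPProof S ((GLPFormula.dia n (blockIter j n k l)).imp (blockIter j n k l)) := by
  have hT : GLPFormula.top.mods ⊆ S := by simp [GLPFormula.mods]
  have hP := GLPAux.modsPow hn hT k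
  induction l with
  | zero =>
    exact ⟨hT, hT, GLPAux.idI hT, GLPAux.idI hT,
      GLPAux.impTrue hT (by simp [GLPFormula.mods, blockIter, *]) (GLPProof.nec hn GLPAux.topI),
      GLPAux.impTrue (GLPAux.modsDia hn hT) hT GLPAux.topI⟩
  | succ l ih =>
    obtain ⟨hQ, hB, a, b, c, d⟩ := ih
    obtain ⟨p1, p2⟩ := GLPAux.pull hn hB c d k
    have hPB := GLPAux.modsPow hn hB k
    have hA := GLPAux.modsAnd hP hB
    have hAQ := GLPAux.modsAnd hP hQ
    have hD := GLPAux.modsDia hj hPB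
    refine ⟨GLPAux.modsDia hj hAQ, hD, ?_, ?_, GLPProof.mono hjn hj hn hPB, ?_⟩
    · refine GLPAux.diaMono hj hAQ hPB (GLPAux.comp hAQ hA hPB ?_ p2)
      exact GLPAux.andI hAQ hP hB (GLPAux.andL hP hQ)
        (GLPAux.comp hAQ hQ hB (GLPAux.andR hP hQ) a)
    · refine GLPAux.diaMono hj hPB hAQ (GLPAux.comp hPB hA hAQ p1 ?_)
      exact GLPAux.andI hA hP hQ (GLPAux.andL hP hB)
        (GLPAux.comp hA hB hQ (GLPAux.andR hP hB) b)
    · exact GLPAux.comp (GLPAux.modsDia hn hD) (GLPAux.modsDia hj hD) hD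
        (GLPProof.negIntro hjn hj hn hD) (GLPAux.diaTrans hj hPB)

/-- For `j < n`, `Q_j^l(⟨n⟩^k⊤) ↔ (⟨j⟩⟨n⟩^k)^l⊤` is derivable in GLP_ω. -/
theorem Q_of_iterated_dia_iff_block (j n : ℕ) (hjn : j < n) (k l : ℕ) :
    GLPomegaProves ((Q (j : Ordinal) l (diaPow (n : Ordinal) k GLPFormula.top)).biimp
      (blockIter (j : Ordinal) (n : Ordinal) k l)) := by
  have hj : (j : Ordinal) ∈ Set.Iio Ordinal.omega0 := Ordinal.natCast_lt_omega0 j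
  have hn : (n : Ordinal) ∈ Set.Iio Ordinal.omega0 := Ordinal.natCast_lt_omega0 n
  obtain ⟨hQ, hB, a, b, -, -⟩ := GLPAux.main_s11 (Nat.cast_lt.mpr hjn) hj hn k l
  exact GLPAux.biI hQ hB a b
end

section
/- For all natural numbers j < n and all k, l < ω, the implication ⟨j⟩⟨n⟩^{k+l}⊤ → (⟨j⟩⟨n⟩^k)^l⊤ is derivable in GLP_ω, where ⟨n⟩^m⊤ denotes m iterated applications of ⟨n⟩ to ⊤ and (⟨j⟩⟨n⟩^k)^l⊤ denotes l iterated applications of the block ⟨j⟩⟨n⟩^k to ⊤. -/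
open GLPFormula in
theorem GLPaux_dia_mods (x : Ordinal) (φ : GLPFormula) :
    (dia x φ).mods = insert x φ.mods := rfl

theorem GLPaux_diaPow_mods {S : Set Ordinal} {n : Ordinal} (hn : n ∈ S) {φ : GLPFormula}
    (h : φ.mods ⊆ S) (k : ℕ) : (diaPow n k φ).mods ⊆ S := by
  induction k with
  | zero => exact h
  | succ k ih => exact Set.insert_subset hn ih

theorem GLPaux_block_mods {S : Set Ordinal} {j n : Ordinal} (hj : j ∈ S) (hn : n ∈ S)
    (k l : ℕ) : (blockIter j n k l).mods ⊆ S := by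
  induction l with
  | zero => exact Set.empty_subset _
  | succ l ih => exact Set.insert_subset hj (GLPaux_diaPow_mods hn ih k)

/-- Hypothetical syllogism. -/
theorem GLPaux_syl {S : Set Ordinal} {φ ψ χ : GLPFormula} (hφ : φ.mods ⊆ S)
    (hψ : ψ.mods ⊆ S) (hχ : χ.mods ⊆ S)
    (h1 : GLPProof S (φ.imp ψ)) (h2 : GLPProof S (ψ.imp χ)) : GLPProof S (φ.imp χ) := by
  refine .mp (.mp (.taut (φ := (φ.imp ψ).imp ((ψ.imp χ).imp (φ.imp χ))) ?_ ?_) h1) h2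
  · simp only [GLPFormula.mods, Set.union_subset_iff]; tauto
  · intro v _ _ _ hi
    simp only [hi]
    cases v φ <;> cases v ψ <;> cases v χ <;> rfl

/-- Regularity of the box. -/
theorem GLPaux_boxMono {S : Set Ordinal} {n : Ordinal} (hn : n ∈ S) {φ ψ : GLPFormula}
    (hφ : φ.mods ⊆ S) (hψ : ψ.mods ⊆ S)
    (h : GLPProof S (φ.imp ψ)) : GLPProof S ((φ.box n).imp (ψ.box n)) :=
  .mp (.distr hn hφ hψ) (.nec hn h)

/-- If `B → (X → Y)` and `B → [n]B` then `B → (⟨n⟩X → ⟨n⟩Y)`. -/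
theorem GLPaux_step {S : Set Ordinal} {n : Ordinal} (hn : n ∈ S) {B X Y : GLPFormula}
    (hB : B.mods ⊆ S) (hX : X.mods ⊆ S) (hY : Y.mods ⊆ S)
    (hb : GLPProof S (B.imp (B.box n))) (h : GLPProof S (B.imp (X.imp Y))) :
    GLPProof S (B.imp ((GLPFormula.dia n X).imp (GLPFormula.dia n Y))) := by
  have h1 : GLPProof S (B.imp (Y.neg.imp X.neg)) := by
    refine .mp (.taut (φ := (B.imp (X.imp Y)).imp (B.imp (Y.neg.imp X.neg))) ?_ ?_) h
    · simp only [GLPFormula.mods, Set.union_subset_iff]; tauto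
    · intro v _ hv _ hi
      simp only [hi, hv]
      cases v B <;> cases v X <;> cases v Y <;> rfl
  have mYX : (Y.neg.imp X.neg).mods ⊆ S := Set.union_subset hY hX
  have h2 := GLPaux_boxMono hn hB mYX h1
  have h3 : GLPProof S (((Y.neg.imp X.neg).box n).imp ((Y.neg.box n).imp (X.neg.box n))) :=
    .distr hn hY hX
  have mb : (B.box n).mods ⊆ S := Set.insert_subset hn hB
  have mx : (X.neg.box n).mods ⊆ S := Set.insert_subset hn hX
  have my : (Y.neg.box n).mods ⊆ S := Set.insert_subset hn hY
  have mi : ((Y.neg.box n).imp (X.neg.box n)).mods ⊆ S := Set.union_subset my mx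
  have h4 := GLPaux_syl hB mb mi hb
    (GLPaux_syl (ψ := (Y.neg.imp X.neg).box n) mb (Set.insert_subset hn mYX) mi h2 h3)
  refine .mp (.taut (φ := (B.imp ((Y.neg.box n).imp (X.neg.box n))).imp
    (B.imp ((X.neg.box n).neg.imp (Y.neg.box n).neg))) ?_ ?_) h4
  · exact Set.union_subset (Set.union_subset hB mi) (Set.union_subset hB (Set.union_subset mx my))
  · intro v _ hv _ hi
    simp only [hi, hv (X.neg.box n), hv (Y.neg.box n)]
    cases v B <;> cases v (X.neg.box n) <;> cases v (Y.neg.box n) <;> rfl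

theorem GLPaux_pow {S : Set Ordinal} {n : Ordinal} (hn : n ∈ S) {B φ : GLPFormula}
    (hB : B.mods ⊆ S) (hφ : φ.mods ⊆ S)
    (hb : GLPProof S (B.imp (B.box n))) (k : ℕ) :
    GLPProof S (B.imp ((diaPow n k φ).imp (diaPow n k B))) := by
  induction k with
  | zero =>
    refine .taut ?_ ?_
    · exact Set.union_subset hB (Set.union_subset hφ hB)
    · intro v _ _ _ hi
      simp only [hi, diaPow]
      cases v B <;> cases v φ <;> rfl
  | succ k ih =>
    exact GLPaux_step hn hB (GLPaux_diaPow_mods hn hφ k) (GLPaux_diaPow_mods hn hB k) hb ih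

theorem GLPaux_add (n : Ordinal) (k m : ℕ) (φ : GLPFormula) :
    diaPow n (k + m) φ = diaPow n k (diaPow n m φ) := by
  induction k with
  | zero => simp [diaPow]
  | succ k ih => rw [Nat.succ_add]; simp only [diaPow, ih]

/-- Regularity of the diamond. -/
theorem GLPaux_diaMono {S : Set Ordinal} {n : Ordinal} (hn : n ∈ S) {X Y : GLPFormula}
    (hX : X.mods ⊆ S) (hY : Y.mods ⊆ S) (h : GLPProof S (X.imp Y)) :
    GLPProof S ((GLPFormula.dia n X).imp (GLPFormula.dia n Y)) := by
  have ht : GLPProof S GLPFormula.top := .taut (Set.empty_subset _) (fun v h _ _ _ => h)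
  have weak : ∀ {φ : GLPFormula}, φ.mods ⊆ S → GLPProof S φ →
      GLPProof S (GLPFormula.top.imp φ) := by
    intro φ hφ p
    refine .mp (.taut (φ := φ.imp (GLPFormula.top.imp φ)) ?_ ?_) p
    · exact Set.union_subset hφ (Set.union_subset (Set.empty_subset _) hφ)
    · intro v h0 _ _ hi
      simp only [hi, h0]
      cases v φ <;> rfl
  exact .mp (GLPaux_step hn (Set.empty_subset _) hX hY
    (weak (Set.insert_subset hn (Set.empty_subset _)) (.nec hn ht))
    (weak (Set.union_subset hX hY) h)) ht

theorem GLPaux_main {S : Set Ordinal} {j n : Ordinal} (hj : j ∈ S) (hn : n ∈ S) (hjn : j < n)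
    (k l : ℕ) : GLPProof S ((GLPFormula.dia j (diaPow n (k + l) GLPFormula.top)).imp
      (blockIter j n k l)) := by
  have mt : GLPFormula.top.mods ⊆ S := Set.empty_subset _
  induction l with
  | zero =>
    refine .taut ?_ ?_
    · exact Set.union_subset (Set.insert_subset hj (GLPaux_diaPow_mods hn mt _)) mt
    · intro v h0 _ _ hi
      simp [hi, blockIter, h0]
  | succ l ih =>
    have mB := GLPaux_block_mods hj hn k l
    have mP := GLPaux_diaPow_mods hn mt (k + l)
    have mP1 := GLPaux_diaPow_mods hn mt (k + (l + 1))
    have mK := GLPaux_diaPow_mods hn mB k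
    refine GLPaux_diaMono hj mP1 mK ?_
    have hb : GLPProof S ((blockIter j n k l).imp ((blockIter j n k l).box n)) := by
      cases l with
      | zero =>
        refine .mp (.taut (φ := (GLPFormula.top.box n).imp
          (GLPFormula.top.imp (GLPFormula.top.box n))) ?_ ?_)
          (.nec hn (.taut mt (fun v h _ _ _ => h)))
        · simp [GLPFormula.mods, Set.insert_subset_iff, hn]
        · intro v h0 _ _ hi
          simp only [hi, h0]
          cases v (GLPFormula.top.box n) <;> rfl
      | succ l => exact .mono hjn hj hn (GLPaux_diaPow_mods hn (GLPaux_block_mods hj hn k l) k)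
    have h1 : GLPProof S ((diaPow n (k + (l + 1)) GLPFormula.top).imp (blockIter j n k l)) :=
      GLPaux_syl (ψ := GLPFormula.dia j (diaPow n (k + l) GLPFormula.top)) mP1 (Set.insert_subset hj mP) mB
        (GLPProof.negIntro hjn hj hn mP) ih
    have h2 := GLPaux_pow hn mB (GLPaux_diaPow_mods hn mt (l + 1)) hb k
    rw [← GLPaux_add] at h2
    generalize diaPow n (k + (l + 1)) GLPFormula.top = P at *
    generalize blockIter j n k l = B at *
    generalize diaPow n k B = K at *
    refine .mp (.mp (.taut (φ := (P.imp B).imp ((B.imp (P.imp K)).imp (P.imp K))) ?_ ?_) h1) h2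
    · simp only [GLPFormula.mods, Set.union_subset_iff]; tauto
    · intro v _ _ _ hi
      simp only [hi]
      cases v P <;> cases v B <;> cases v K <;> rfl

/-- For `j < n`, `⟨j⟩⟨n⟩^{k+l}⊤ → (⟨j⟩⟨n⟩^k)^l⊤` is derivable in GLP_ω. -/
theorem dia_iterated_to_block (j n : ℕ) (hjn : j < n) (k l : ℕ) :
    GLPomegaProves ((GLPFormula.dia (j : Ordinal)
        (diaPow (n : Ordinal) (k + l) GLPFormula.top)).imp
      (blockIter (j : Ordinal) (n : Ordinal) k l)) := by
  exact GLPaux_main (Ordinal.natCast_lt_omega0 j) (Ordinal.natCast_lt_omega0 n)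
    (by exact_mod_cast hjn) k l
end

section
/- For every ordinal ζ and every worm A all of whose modality indices are strictly less than ζ, the implication ⟨ζ⟩⊤ → A is derivable in GLP. -/
theorem worm_imp_box (ζ : Ordinal) (A : List Ordinal) (h : ∀ γ ∈ A, γ < ζ) :
    GLPProof Set.univ ((wormFormula A).imp (GLPFormula.box ζ (wormFormula A))) := by
  cases A with
  | nil =>
    have h1 : GLPProof Set.univ (GLPFormula.box ζ GLPFormula.top) :=
      .nec (Set.mem_univ _) (.taut (Set.subset_univ _) (fun v ht _ _ _ => ht))
    refine .mp (.taut (Set.subset_univ _) ?_) h1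
    intro v ht hn ha hi
    simp only [wormFormula, hi, ht]
    cases v (GLPFormula.box ζ GLPFormula.top) <;> rfl
  | cons γ B =>
    exact .mono (h γ (by simp)) (Set.mem_univ _) (Set.mem_univ _) (Set.subset_univ _)

theorem box_step (ζ : Ordinal) (φ : GLPFormula) :
    GLPProof Set.univ ((GLPFormula.box ζ φ).imp
      (GLPFormula.box ζ (φ.neg.imp GLPFormula.top.neg))) := by
  refine .mp (.distr (Set.mem_univ _) (Set.subset_univ _) (Set.subset_univ _))
    (.nec (Set.mem_univ _) (.taut (Set.subset_univ _) ?_))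
  intro v ht hn ha hi
  simp only [hi, hn, ht]
  cases v φ <;> rfl

/-- If every modality index of the worm `A` is strictly below `ζ`,
then `⊢_GLP ⟨ζ⟩⊤ → A`. -/
theorem dia_top_implies_worm (ζ : Ordinal) (A : List Ordinal) (h : ∀ γ ∈ A, γ < ζ) :
    GLPProves ((GLPFormula.dia ζ GLPFormula.top).imp (wormFormula A)) := by
  unfold GLPProves
  induction A with
  | nil =>
    refine .taut (Set.subset_univ _) ?_
    intro v ht hn ha hi
    simp [wormFormula, hi, ht]
  | cons γ B ih =>
    have h1 := ih (fun δ hδ => h δ (by simp [hδ]))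
    have h2 := worm_imp_box ζ B (fun δ hδ => h δ (by simp [hδ]))
    have h3 := box_step ζ (wormFormula B)
    have h4 : GLPProof Set.univ _ := .distr (ξ := ζ) (φ := (wormFormula B).neg)
      (ψ := GLPFormula.top.neg) (Set.mem_univ _) (Set.subset_univ _) (Set.subset_univ _)
    have h5 : GLPProof Set.univ _ := .negIntro (φ := wormFormula B) (h γ (by simp))
      (Set.mem_univ _) (Set.mem_univ _) (Set.subset_univ _)
    refine .mp (.mp (.mp (.mp (.mp (.taut (Set.subset_univ _) ?_) h1) h2) h3) h4) h5
    intro v ht hn ha hi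
    simp only [wormFormula, GLPFormula.dia, hi, hn]
    generalize v (wormFormula B) = a
    generalize v (GLPFormula.box ζ (wormFormula B)) = b
    generalize v (GLPFormula.box ζ _) = c
    generalize v (GLPFormula.box ζ _) = d
    generalize v (GLPFormula.box ζ _) = e
    generalize v (GLPFormula.box γ _) = f
    revert a b c d e f
    decide
end

section
/- (Transfinite reduction property) Let γ < ζ be ordinals, let τ be a set of worms such that every worm ⟨γ⟩C with C ∈ τ has all its modality indices strictly less than ζ, and write ⟨γ⟩τ := { ⟨γ⟩C : C ∈ τ }. Assume ⟨γ⟩τ is <_γ-cofinal in ⟨ζ⟩⊤, in the sense that for every worm B whose modality indices all lie in the interval [γ, ζ) one has ⟨γ⟩τ ⊢_GLP ⟨γ⟩B. Then for every GLP formula ψ, the formula ⟨ζ⟩ψ is γ-conservative over the set { Q(⟨γ⟩C, ψ) : C ∈ τ }; that is, for every formula φ, ⟨ζ⟩ψ ⊢_GLP ⟨γ⟩φ if and only if { Q(⟨γ⟩C, ψ) : C ∈ τ } ⊢_GLP ⟨γ⟩φ. -/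
namespace TRP
open GLPFormula

abbrev P (φ : GLPFormula) : Prop := GLPProof Set.univ φ

/-- Boolean valuations, in propositional form. -/
structure Val (v : GLPFormula → Bool) : Prop where
  top : v GLPFormula.top = true
  neg : ∀ ψ, v ψ.neg = true ↔ ¬ v ψ = true
  and : ∀ ψ χ, v (ψ.and χ) = true ↔ (v ψ = true ∧ v χ = true)
  imp : ∀ ψ χ, v (ψ.imp χ) = true ↔ (v ψ = true → v χ = true)

theorem c0 {φ : GLPFormula} (h : ∀ v, Val v → v φ = true) : P φ := by
  refine GLPProof.taut (Set.subset_univ _) ?_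
  intro v h1 h2 h3 h4
  refine h v ⟨h1, ?_, ?_, ?_⟩
  · intro a; rw [h2]; cases v a <;> simp
  · intro a b; rw [h3]; simp
  · intro a b; rw [h4]; cases v a <;> simp

theorem c1 {a φ : GLPFormula} (ha : P a) (h : ∀ v, Val v → v a = true → v φ = true) : P φ :=
  GLPProof.mp (c0 fun v hv => (hv.imp _ _).2 (h v hv)) ha

theorem c2 {a b φ : GLPFormula} (ha : P a) (hb : P b)
    (h : ∀ v, Val v → v a = true → v b = true → v φ = true) : P φ :=
  GLPProof.mp (c1 ha fun v hv h1 => (hv.imp _ _).2 (h v hv h1)) hb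

theorem c3 {a b c φ : GLPFormula} (ha : P a) (hb : P b) (hc : P c)
    (h : ∀ v, Val v → v a = true → v b = true → v c = true → v φ = true) : P φ :=
  GLPProof.mp (c2 ha hb fun v hv h1 h2 => (hv.imp _ _).2 (h v hv h1 h2)) hc

theorem val_conj {v : GLPFormula → Bool} (hv : Val v) (l : List GLPFormula) :
    v (listConj l) = true ↔ ∀ x ∈ l, v x = true := by
  induction l with
  | nil => simp [listConj, hv.top]
  | cons a l ih => simp [listConj, hv.and, ih]

theorem distr (ξ : Ordinal) (a b : GLPFormula) :
    P ((box ξ (a.imp b)).imp ((box ξ a).imp (box ξ b))) :=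
  GLPProof.distr trivial (Set.subset_univ _) (Set.subset_univ _)

theorem trans (ξ : Ordinal) (a : GLPFormula) : P ((box ξ a).imp (box ξ (box ξ a))) :=
  GLPProof.trans trivial (Set.subset_univ _)

theorem lob (ξ : Ordinal) (a : GLPFormula) :
    P ((box ξ ((box ξ a).imp a)).imp (box ξ a)) :=
  GLPProof.lob trivial (Set.subset_univ _)

theorem negIntro {ξ ζ : Ordinal} (h : ξ < ζ) (a : GLPFormula) :
    P ((dia ζ a).imp (dia ξ a)) :=
  GLPProof.negIntro h trivial trivial (Set.subset_univ _)

theorem mono {ξ ζ : Ordinal} (h : ξ < ζ) (a : GLPFormula) :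
    P ((dia ξ a).imp (box ζ (dia ξ a))) :=
  GLPProof.mono h trivial trivial (Set.subset_univ _)

theorem nec (ξ : Ordinal) {a : GLPFormula} (h : P a) : P (box ξ a) :=
  GLPProof.nec trivial h

theorem box_mono (ξ : Ordinal) {a b : GLPFormula} (h : P (a.imp b)) :
    P ((box ξ a).imp (box ξ b)) := GLPProof.mp (distr ξ a b) (nec ξ h)

theorem dia_box (ξ : Ordinal) {a b c : GLPFormula} (h : P (a.imp (b.imp c))) :
    P ((dia ξ a).imp ((box ξ b).imp (dia ξ c))) := by
  have h1 : P (b.imp (c.neg.imp a.neg)) :=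
    c1 h fun v hv => by simp only [hv.imp, hv.neg]; tauto
  refine c2 (box_mono ξ h1) (distr ξ c.neg a.neg) fun v hv => ?_
  simp only [hv.imp, hv.neg, dia]; tauto

theorem dia_mono (ξ : Ordinal) {a c : GLPFormula} (h : P (a.imp c)) :
    P ((dia ξ a).imp (dia ξ c)) := by
  have h1 : P (c.neg.imp a.neg) :=
    c1 h fun v hv => by simp only [hv.imp, hv.neg]; tauto
  refine c1 (box_mono ξ h1) fun v hv => ?_
  simp only [hv.imp, hv.neg, dia]; tauto

theorem dia_trans (ξ : Ordinal) (a : GLPFormula) :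
    P ((dia ξ (dia ξ a)).imp (dia ξ a)) := by
  have h1 : P ((box ξ a.neg).imp (dia ξ a).neg) :=
    c0 fun v hv => by simp only [hv.imp, hv.neg, dia]; tauto
  refine c2 (trans ξ a.neg) (box_mono ξ h1) fun v hv => ?_
  simp only [hv.imp, hv.neg, dia]; tauto

theorem dia_le {ξ ζ : Ordinal} (h : ξ ≤ ζ) (a : GLPFormula) :
    P ((dia ζ a).imp (dia ξ a)) := by
  rcases h.lt_or_eq with h | rfl
  · exact negIntro h a
  · exact c0 fun v hv => (hv.imp _ _).2 id

theorem box_le {ξ ζ : Ordinal} (h : ξ ≤ ζ) (a : GLPFormula) :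
    P ((box ξ a).imp (box ζ a)) := by
  have e1 : P (a.imp a.neg.neg) := c0 fun v hv => by simp only [hv.imp, hv.neg]; tauto
  have e2 : P (a.neg.neg.imp a) := c0 fun v hv => by simp only [hv.imp, hv.neg]; tauto
  refine c3 (box_mono ξ e1) (box_mono ζ e2) (dia_le h a.neg) fun v hv => ?_
  simp only [hv.imp, hv.neg, dia]; tauto

/-! ### Relativization -/

/-- Relativization of all modalities to `ψ`. -/
def rel (ψ : GLPFormula) : GLPFormula → GLPFormula
  | var n => var n
  | top => top
  | neg a => neg (rel ψ a)
  | .and a b => .and (rel ψ a) (rel ψ b)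
  | imp a b => imp (rel ψ a) (rel ψ b)
  | box ξ a => box ξ (ψ.imp (rel ψ a))

theorem rel_dia (ψ : GLPFormula) (ξ : Ordinal) (a : GLPFormula) :
    P ((rel ψ (dia ξ a)).imp (dia ξ (ψ.and (rel ψ a)))) ∧
    P ((dia ξ (ψ.and (rel ψ a))).imp (rel ψ (dia ξ a))) := by
  have h1 : P ((ψ.imp (rel ψ a).neg).imp (ψ.and (rel ψ a)).neg) :=
    c0 fun v hv => by simp only [hv.imp, hv.neg, hv.and]; tauto
  have h2 : P ((ψ.and (rel ψ a)).neg.imp (ψ.imp (rel ψ a).neg)) :=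
    c0 fun v hv => by simp only [hv.imp, hv.neg, hv.and]; tauto
  constructor
  · refine c1 (box_mono ξ h2) fun v hv => ?_
    simp only [hv.imp, hv.neg, dia, rel]; tauto
  · refine c1 (box_mono ξ h1) fun v hv => ?_
    simp only [hv.imp, hv.neg, dia, rel]; tauto

theorem rel_sound (ψ : GLPFormula) {a : GLPFormula} (h : P a) : P (rel ψ a) := by
  induction h with
  | @taut φ _ ht =>
    refine GLPProof.taut (Set.subset_univ _) ?_
    intro v h1 h2 h3 h4
    exact ht (fun x => v (rel ψ x)) h1 (fun a => h2 _) (fun a b => h3 _ _) (fun a b => h4 _ _)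
  | @distr ξ a b _ _ _ =>
    have h1 : P ((ψ.imp ((rel ψ a).imp (rel ψ b))).imp
        ((ψ.imp (rel ψ a)).imp (ψ.imp (rel ψ b)))) :=
      c0 fun v hv => by simp only [hv.imp]; tauto
    refine c2 (box_mono ξ h1) (distr ξ (ψ.imp (rel ψ a)) (ψ.imp (rel ψ b))) fun v hv => ?_
    simp only [hv.imp, rel]; tauto
  | @trans ξ a _ _ =>
    have h1 : P ((box ξ (ψ.imp (rel ψ a))).imp (ψ.imp (box ξ (ψ.imp (rel ψ a))))) :=
      c0 fun v hv => by simp only [hv.imp]; tauto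
    refine c2 (box_mono ξ h1) (trans ξ (ψ.imp (rel ψ a))) fun v hv => ?_
    simp only [hv.imp, rel]; tauto
  | @lob ξ a _ _ =>
    have h1 : P ((ψ.imp ((box ξ (ψ.imp (rel ψ a))).imp (rel ψ a))).imp
        ((box ξ (ψ.imp (rel ψ a))).imp (ψ.imp (rel ψ a)))) :=
      c0 fun v hv => by simp only [hv.imp]; tauto
    refine c2 (box_mono ξ h1) (lob ξ (ψ.imp (rel ψ a))) fun v hv => ?_
    simp only [hv.imp, rel]; tauto
  | @negIntro ξ ζ a h _ _ _ =>
    refine c3 (rel_dia ψ ζ a).1 (rel_dia ψ ξ a).2 (negIntro h (ψ.and (rel ψ a))) fun v hv => ?_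
    change _ → _ → _ → v ((rel ψ (dia ζ a)).imp (rel ψ (dia ξ a))) = true
    simp only [hv.imp]; tauto
  | @mono ξ ζ a h _ _ _ =>
    have h1 : P ((dia ξ (ψ.and (rel ψ a))).imp (ψ.imp (rel ψ (dia ξ a)))) :=
      c1 (rel_dia ψ ξ a).2 fun v hv => by simp only [hv.imp]; tauto
    refine c3 (rel_dia ψ ξ a).1 (mono h (ψ.and (rel ψ a))) (box_mono ζ h1) fun v hv => ?_
    change _ → _ → _ → v ((rel ψ (dia ξ a)).imp (box ζ (ψ.imp (rel ψ (dia ξ a))))) = true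
    simp only [hv.imp]; tauto
  | mp _ _ ih1 ih2 => exact GLPProof.mp ih1 ih2
  | @nec ξ a _ _ ih =>
    exact nec ξ (c1 ih fun v hv => by simp only [hv.imp]; tauto)

theorem rel_worm (ψ : GLPFormula) (A : List Ordinal) :
    P ((rel ψ (wormFormula A)).imp (QWorm A ψ)) ∧
    P ((QWorm A ψ).imp (rel ψ (wormFormula A))) := by
  induction A with
  | nil => exact ⟨c0 fun v hv => (hv.imp _ _).2 id, c0 fun v hv => (hv.imp _ _).2 id⟩
  | cons ξ A ih =>
    have h1 : P ((ψ.and (rel ψ (wormFormula A))).imp (ψ.and (QWorm A ψ))) :=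
      c1 ih.1 fun v hv => by simp only [hv.imp, hv.and]; tauto
    have h2 : P ((ψ.and (QWorm A ψ)).imp (ψ.and (rel ψ (wormFormula A)))) :=
      c1 ih.2 fun v hv => by simp only [hv.imp, hv.and]; tauto
    constructor
    · refine c2 (rel_dia ψ ξ (wormFormula A)).1 (dia_mono ξ h1) fun v hv => ?_
      simp only [hv.imp, wormFormula, QWorm]; tauto
    · refine c2 (rel_dia ψ ξ (wormFormula A)).2 (dia_mono ξ h2) fun v hv => ?_
      simp only [hv.imp, wormFormula, QWorm]; tauto

theorem rel_conj (ψ : GLPFormula) (l : List GLPFormula) :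
    rel ψ (listConj l) = listConj (l.map (rel ψ)) := by
  induction l with
  | nil => rfl
  | cons a l ih => simp [listConj, rel, ih]

/-! ### Reasoning from sets of hypotheses -/

theorem sp_thm {R : Set GLPFormula} {a : GLPFormula} (h : P a) : SetProves Set.univ R a :=
  ⟨[], by simp, c1 h fun v hv => by simp only [hv.imp]; tauto⟩

theorem sp_mem {R : Set GLPFormula} {a : GLPFormula} (h : a ∈ R) : SetProves Set.univ R a :=
  ⟨[a], by simpa using h, c0 fun v hv => by simp [hv.imp, listConj, hv.and, hv.top]⟩

theorem sp_mp {R : Set GLPFormula} {a b : GLPFormula} (h : SetProves Set.univ R (a.imp b))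
    (hq : SetProves Set.univ R a) : SetProves Set.univ R b := by
  obtain ⟨l, hl, h⟩ := h
  obtain ⟨lq, hlq, hq⟩ := hq
  refine ⟨l ++ lq, ?_, c2 h hq fun v hv => ?_⟩
  · intro x hx
    rcases List.mem_append.1 hx with hx | hx
    exacts [hl x hx, hlq x hx]
  · simp only [hv.imp, val_conj hv]
    intro h1 h2 h3
    exact h1 (fun x hx => h3 x (List.mem_append_left _ hx))
      (h2 fun x hx => h3 x (List.mem_append_right _ hx))

/-- If every member of `R` follows from `T`, then so does everything `R` proves. -/
theorem sp_cut {R T : Set GLPFormula} {a : GLPFormula} (hR : ∀ x ∈ R, SetProves Set.univ T x)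
    (h : SetProves Set.univ R a) : SetProves Set.univ T a := by
  obtain ⟨l, hl, h⟩ := h
  refine sp_mp (sp_thm h) ?_
  clear h
  induction l with
  | nil => exact sp_thm (c0 fun v hv => hv.top)
  | cons x l ih =>
    refine sp_mp (sp_mp (sp_thm (c0 fun v hv => ?_)) (hR x (hl x (by simp))))
      (ih fun y hy => hl y (by simp [hy]))
    simp only [listConj, hv.imp, hv.and]; tauto

/-! ### The translation evaluating formulas at a new root -/

/-- Truth at a new root placed `ζ`-below a given point. -/
noncomputable def tr (ζ : Ordinal) : GLPFormula → GLPFormula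
  | var n => var n
  | top => top
  | neg a => neg (tr ζ a)
  | .and a b => .and (tr ζ a) (tr ζ b)
  | imp a b => imp (tr ζ a) (tr ζ b)
  | box ξ a => if ξ < ζ then box ξ a else if ξ = ζ then .and a (box ζ a) else top

theorem tr_lt {ξ ζ : Ordinal} (h : ξ < ζ) (a : GLPFormula) : tr ζ (box ξ a) = box ξ a := by
  simp [tr, h]
theorem tr_eq (ζ : Ordinal) (a : GLPFormula) : tr ζ (box ζ a) = GLPFormula.and a (box ζ a) := by
  simp [tr]
theorem tr_gt {ξ ζ : Ordinal} (h : ζ < ξ) (a : GLPFormula) : tr ζ (box ξ a) = top := by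
  simp [tr, not_lt.2 h.le, h.ne']

/-- Reflection instances below `ζ`. -/
def Rfl (ζ : Ordinal) : Set GLPFormula := {x | ∃ ξ < ζ, ∃ a, x = (box ξ a).imp a}

theorem tr_sound (ζ : Ordinal) {a : GLPFormula} (h : P a) :
    SetProves Set.univ (Rfl ζ) (tr ζ a) := by
  induction h with
  | @taut φ _ ht =>
    refine sp_thm (GLPProof.taut (Set.subset_univ _) ?_)
    intro v h1 h2 h3 h4
    exact ht (fun x => v (tr ζ x)) h1 (fun a => h2 _) (fun a b => h3 _ _) (fun a b => h4 _ _)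
  | @distr ξ a b _ _ _ =>
    refine sp_thm (c1 (distr ξ a b) fun v hv => ?_)
    change _ → v ((tr ζ (box ξ (a.imp b))).imp ((tr ζ (box ξ a)).imp (tr ζ (box ξ b)))) = true
    rcases lt_trichotomy ξ ζ with h | rfl | h
    · simp only [tr_lt h, hv.imp]; tauto
    · simp only [tr_eq, hv.imp, hv.and]; tauto
    · simp only [tr_gt h, hv.imp, hv.top]; tauto
  | @trans ξ a _ _ =>
    refine sp_thm (c1 (trans ξ a) fun v hv => ?_)
    change _ → v ((tr ζ (box ξ a)).imp (tr ζ (box ξ (box ξ a)))) = true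
    rcases lt_trichotomy ξ ζ with h | rfl | h
    · simp only [tr_lt h, hv.imp]; tauto
    · simp only [tr_eq, hv.imp, hv.and]; tauto
    · simp only [tr_gt h, hv.imp, hv.top]; tauto
  | @lob ξ a _ _ =>
    refine sp_thm (c1 (lob ξ a) fun v hv => ?_)
    change _ → v ((tr ζ (box ξ ((box ξ a).imp a))).imp (tr ζ (box ξ a))) = true
    rcases lt_trichotomy ξ ζ with h | rfl | h
    · simp only [tr_lt h, hv.imp]; tauto
    · simp only [tr_eq, hv.imp, hv.and]; tauto
    · simp only [tr_gt h, hv.imp, hv.top]; tauto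
  | @negIntro ξ η a hlt _ _ _ =>
    change SetProves Set.univ (Rfl ζ)
      ((tr ζ (box η a.neg)).neg.imp (tr ζ (box ξ a.neg)).neg)
    rcases lt_trichotomy η ζ with h | rfl | h
    · rw [tr_lt h, tr_lt (hlt.trans h)]
      exact sp_thm (negIntro hlt a)
    · have hR : SetProves Set.univ (Rfl η) ((box ξ a.neg).imp a.neg) :=
        sp_mem ⟨ξ, hlt, _, rfl⟩
      refine sp_mp (sp_thm (c1 (negIntro hlt a) fun v hv => ?_)) hR
      simp only [tr_eq, tr_lt hlt, dia, hv.imp, hv.and, hv.neg]; tauto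
    · refine sp_thm (c0 fun v hv => ?_)
      simp only [tr_gt h, hv.imp, hv.neg, hv.top]; tauto
  | @mono ξ η a hlt _ _ _ =>
    change SetProves Set.univ (Rfl ζ)
      ((tr ζ (box ξ a.neg)).neg.imp (tr ζ (box η (dia ξ a))))
    refine sp_thm (c1 (mono hlt a) fun v hv => ?_)
    rcases lt_trichotomy η ζ with h | rfl | h
    · rw [tr_lt h, tr_lt (hlt.trans h)]
      exact id
    · simp only [tr_eq, tr_lt hlt, hv.imp, hv.and, dia]; tauto
    · simp only [tr_gt h, hv.imp, hv.top]; tauto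
  | mp _ _ ih1 ih2 => exact sp_mp ih1 ih2
  | @nec ξ a ha hq ih =>
    rcases lt_trichotomy ξ ζ with h | rfl | h
    · rw [tr_lt h]; exact sp_thm (nec ξ hq)
    · rw [tr_eq]
      exact sp_thm (c2 hq (nec ξ hq) fun v hv => by simp only [hv.and]; tauto)
    · rw [tr_gt h]; exact sp_thm (c0 fun v hv => hv.top)

/-! ### Pigeonhole: finitely many reflection instances along a chain -/

theorem Q_box (δ : Ordinal) (ψ α : GLPFormula) (m : ℕ) :
    P ((QWorm (List.replicate m δ) ψ).imp ((box δ α).imp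
      (QWorm (List.replicate m δ) (ψ.and α)))) := by
  induction m with
  | zero => exact c0 fun v hv => by simp [QWorm, hv.imp, hv.top]
  | succ m ih =>
    have h1 : P ((ψ.and (QWorm (List.replicate m δ) ψ)).imp ((α.and (box δ α)).imp
        ((ψ.and α).and (QWorm (List.replicate m δ) (ψ.and α))))) :=
      c1 ih fun v hv => by simp only [hv.imp, hv.and]; tauto
    have h2 : P (α.imp ((box δ α).imp (α.and (box δ α)))) :=
      c0 fun v hv => by simp only [hv.imp, hv.and]; tauto
    have h3 : P ((box δ α).imp (box δ (α.and (box δ α)))) :=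
      c3 (box_mono δ h2) (trans δ α) (distr δ (box δ α) (α.and (box δ α)))
        fun v hv => by simp only [hv.imp]; tauto
    refine c2 (dia_box δ h1) h3 fun v hv => ?_
    simp only [List.replicate_succ, QWorm, hv.imp]; tauto

theorem not_conj {X : GLPFormula} (l : List GLPFormula) (h : ∀ x ∈ l, P (x.neg.imp X)) :
    P ((listConj l).neg.imp X) := by
  induction l with
  | nil => exact c0 fun v hv => by simp [listConj, hv.imp, hv.neg, hv.top]
  | cons a l ih =>
    refine c2 (h a (by simp)) (ih fun x hx => h x (by simp [hx])) fun v hv => ?_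
    simp only [listConj, hv.imp, hv.neg, hv.and]; tauto

theorem pigeon (δ : Ordinal) (g : GLPFormula) (hg : P ((dia δ g).imp g)) (m : ℕ) :
    ∀ (l : List GLPFormula) (ψ : GLPFormula), l.length = m →
      (∀ x ∈ l, ∃ α, P (x.neg.imp (box δ α)) ∧ P (α.imp x)) →
      P ((listConj l).imp (ψ.imp g)) →
      P ((ψ.and (QWorm (List.replicate m δ) ψ)).imp g) := by
  classical
  induction m with
  | zero =>
    intro l ψ hl _ h
    obtain rfl := List.length_eq_zero_iff.1 hl
    refine c1 h fun v hv => ?_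
    simp only [listConj, hv.imp, hv.and, hv.top]; tauto
  | succ m ih =>
    intro l ψ hl hx h
    have key : ∀ x ∈ l, P (x.neg.imp ((QWorm (List.replicate (m+1) δ) ψ).imp g)) := by
      intro x hxl
      obtain ⟨α, h1, h2⟩ := hx x hxl
      have h3 : P ((listConj (l.erase x)).imp ((ψ.and α).imp g)) := by
        refine c2 h h2 fun v hv => ?_
        simp only [hv.imp, hv.and, val_conj hv]
        intro a b c d
        refine a (fun y hy => ?_) d.1
        by_cases hyx : y = x
        · rw [hyx]; exact b d.2
        · exact c y ((List.mem_erase_of_ne hyx).2 hy)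
      have h4 := ih (l.erase x) (ψ.and α)
        (by rw [List.length_erase_of_mem hxl, hl]; rfl)
        (fun y hy => hx y (List.mem_of_mem_erase hy)) h3
      have h5 : P ((ψ.and (QWorm (List.replicate m δ) ψ)).imp ((α.and (box δ α)).imp g)) :=
        c2 h4 (Q_box δ ψ α m) fun v hv => by simp only [hv.imp, hv.and]; tauto
      have h6 : P (α.imp ((box δ α).imp (α.and (box δ α)))) :=
        c0 fun v hv => by simp only [hv.imp, hv.and]; tauto
      have h7 : P ((box δ α).imp (box δ (α.and (box δ α)))) :=
        c3 (box_mono δ h6) (trans δ α) (distr δ (box δ α) (α.and (box δ α)))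
          fun v hv => by simp only [hv.imp]; tauto
      have h8 : P ((box δ α).imp ((QWorm (List.replicate (m+1) δ) ψ).imp g)) :=
        c3 (dia_box δ h5) h7 hg fun v hv => by
          simp only [List.replicate_succ, QWorm, hv.imp]; tauto
      exact c2 h1 h8 fun v hv => by simp only [hv.imp]; tauto
    refine c2 h (not_conj l key) fun v hv => ?_
    simp only [hv.imp, hv.neg, hv.and]; tauto

theorem choose_bound {γ ζ : Ordinal} (hγζ : γ < ζ) (l : List GLPFormula)
    (hl : ∀ x ∈ l, x ∈ Rfl ζ) :
    ∃ δ, γ ≤ δ ∧ δ < ζ ∧ ∀ x ∈ l, ∃ ξ ≤ δ, ∃ a, x = (box ξ a).imp a := by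
  induction l with
  | nil => exact ⟨γ, le_rfl, hγζ, by simp⟩
  | cons x l ih =>
    obtain ⟨δ, h1, h2, h3⟩ := ih fun y hy => hl y (by simp [hy])
    obtain ⟨ξ, h4, a, rfl⟩ := hl x (by simp)
    refine ⟨max δ ξ, h1.trans (le_max_left _ _), max_lt h2 h4, ?_⟩
    intro y hy
    rcases List.mem_cons.1 hy with rfl | hy
    · exact ⟨ξ, le_max_right _ _, a, rfl⟩
    · obtain ⟨η, h5, b, h6⟩ := h3 y hy
      exact ⟨η, h5.trans (le_max_left _ _), b, h6⟩

theorem main {γ ζ : Ordinal} (hγζ : γ < ζ) {ψ φ : GLPFormula}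
    (h : P ((dia ζ ψ).imp (dia γ φ))) :
    ∃ δ m, γ ≤ δ ∧ δ < ζ ∧
      P ((QWorm (γ :: List.replicate m δ) ψ).imp (dia γ φ)) := by
  obtain ⟨l, hl, h1⟩ := tr_sound ζ h
  obtain ⟨δ, hγδ, hδ, hx⟩ := choose_bound hγζ l hl
  refine ⟨δ, l.length, hγδ, hδ, ?_⟩
  have h2 : P ((listConj l).imp (ψ.imp (dia γ φ))) := by
    refine c1 h1 fun v hv => ?_
    change v ((listConj l).imp ((tr ζ (box ζ ψ.neg)).neg.imp (tr ζ (box γ φ.neg)).neg)) = true → _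
    simp only [tr_eq, tr_lt hγζ, hv.imp, hv.neg, hv.and, dia]; tauto
  have hg : P ((dia δ (dia γ φ)).imp (dia γ φ)) :=
    c2 (dia_le hγδ (dia γ φ)) (dia_trans γ φ) fun v hv => by simp only [hv.imp]; tauto
  have h3 := pigeon δ (dia γ φ) hg l.length l ψ rfl (fun x hxl => by
    obtain ⟨ξ, hξ, a, rfl⟩ := hx x hxl
    refine ⟨a, c1 (box_le hξ a) fun v hv => ?_, c0 fun v hv => ?_⟩
    · simp only [hv.imp, hv.neg]; tauto
    · simp only [hv.imp]; tauto) h2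
  exact c2 (dia_mono γ h3) (dia_trans γ φ) fun v hv => by
    simp only [hv.imp, QWorm]; tauto

/-- `⟨ζ⟩ψ` proves `Q(A,ψ)` for worms below `ζ`. -/
theorem dia_Q (ζ : Ordinal) (ψ : GLPFormula) (A : List Ordinal) (hA : ∀ ξ ∈ A, ξ < ζ) :
    P ((dia ζ ψ).imp (QWorm A ψ)) ∧ P ((QWorm A ψ).imp (box ζ (QWorm A ψ))) := by
  induction A with
  | nil =>
    refine ⟨c0 fun v hv => by simp [QWorm, hv.imp, hv.top], ?_⟩
    exact c1 (nec ζ (c0 fun v hv => hv.top : P top)) fun v hv => by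
      simp only [hv.imp, QWorm]; tauto
  | cons ξ A ih =>
    obtain ⟨h1, h2⟩ := ih fun x hx => hA x (by simp [hx])
    have hξ : ξ < ζ := hA ξ (by simp)
    refine ⟨?_, mono hξ _⟩
    have h3 : P (ψ.imp ((QWorm A ψ).imp (ψ.and (QWorm A ψ)))) :=
      c0 fun v hv => by simp only [hv.imp, hv.and]; tauto
    have h4 : P ((dia ζ ψ).imp (dia ζ (ψ.and (QWorm A ψ)))) :=
      c3 h1 h2 (dia_box ζ h3) fun v hv => by simp only [hv.imp]; tauto
    exact c2 h4 (negIntro hξ (ψ.and (QWorm A ψ))) fun v hv => by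
      simp only [hv.imp, QWorm]; tauto

end TRP

/-- Transfinite reduction property: if `⟨γ⟩τ ⊆ Worms^{<ζ}` is `<_γ`-cofinal in `⟨ζ⟩⊤`,
then `⟨ζ⟩ψ` is `γ`-conservative over `{Q(⟨γ⟩C, ψ) : C ∈ τ}`. -/
theorem transfinite_reduction_property (γ ζ : Ordinal) (hγζ : γ < ζ)
    (τ : Set (List Ordinal))
    (hbound : ∀ C ∈ τ, ∀ ξ ∈ C, ξ < ζ)
    (hcofinal : ∀ B : List Ordinal, (∀ ξ ∈ B, γ ≤ ξ ∧ ξ < ζ) →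
      SetProves Set.univ {χ | ∃ C ∈ τ, χ = wormFormula (γ :: C)} (wormFormula (γ :: B)))
    (ψ φ : GLPFormula) :
    GLPProves ((GLPFormula.dia ζ ψ).imp (GLPFormula.dia γ φ)) ↔
      SetProves Set.univ {χ | ∃ C ∈ τ, χ = QWorm (γ :: C) ψ}
        (GLPFormula.dia γ φ) := by
  constructor
  · intro h
    obtain ⟨δ, m, hγδ, hδ, h1⟩ := TRP.main hγζ h
    obtain ⟨l, hl, h2⟩ := hcofinal (List.replicate m δ) (fun ξ hξ => by
      rw [List.eq_of_mem_replicate hξ]; exact ⟨hγδ, hδ⟩)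
    have h3 : TRP.P (TRP.rel ψ ((listConj l).imp (wormFormula (γ :: List.replicate m δ)))) :=
      TRP.rel_sound ψ h2
    have h4 : TRP.P ((listConj (l.map (TRP.rel ψ))).imp (GLPFormula.dia γ φ)) := by
      refine TRP.c3 h3 (TRP.rel_worm ψ (γ :: List.replicate m δ)).1 h1 fun v hv => ?_
      simp only [TRP.rel, TRP.rel_conj, hv.imp]; tauto
    refine TRP.sp_cut (R := {x | x ∈ l.map (TRP.rel ψ)}) ?_ ⟨_, fun x hx => hx, h4⟩
    intro x hx
    obtain ⟨y, hy, rfl⟩ := List.mem_map.1 hx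
    obtain ⟨C, hC, rfl⟩ := hl y hy
    exact TRP.sp_mp (TRP.sp_thm (TRP.rel_worm ψ (γ :: C)).2) (TRP.sp_mem ⟨C, hC, rfl⟩)
  · intro h
    have h1 : SetProves Set.univ {GLPFormula.dia ζ ψ} (GLPFormula.dia γ φ) := by
      refine TRP.sp_cut ?_ h
      rintro x ⟨C, hC, rfl⟩
      refine TRP.sp_mp (TRP.sp_thm (TRP.dia_Q ζ ψ (γ :: C) ?_).1) (TRP.sp_mem rfl)
      intro ξ hξ
      rcases List.mem_cons.1 hξ with rfl | hξ
      exacts [hγζ, hbound C hC ξ hξ]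
    obtain ⟨l, hl, h2⟩ := h1
    refine TRP.c1 h2 fun v hv => ?_
    simp only [hv.imp, TRP.val_conj hv]
    intro a b
    exact a fun x hx => by rw [hl x hx]; exact b
end
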